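/- Let $\{g_k\}_{k\geq 0}$ be positive reals, $c_0 \geq 1$, $c \geq 1$, $0 < \nu \leq 1$, $\theta \geq 0$, and set $\bar\nu = \frac{\nu}{1+\nu}$, $\bar\theta = \min(\theta,\nu)$. Suppose $\log g_1 \leq \log c_0 + (1+\bar\nu)\log g_0$, and for every $k \geq 1$, $g_{k+1} \leq c g_k^{1+\nu} + c g_k^{1+\bar\nu}(g_k/g_{k-1})^\theta$, and $g_0 \leq \min(1, (2c)^{-1/\bar\nu}, c_0^{-1/\bar\nu})$. Then $g_{k+1} \leq g_k$ for all $k$, and there exist sequences $c_k \geq 1$ and $\nu_k$ with $\nu_0 = \bar\nu$, $\nu_k = \min(\nu, \bar\nu + \frac{\bar\theta\nu_{k-1}}{1+\nu_{k-1}})$, $\log c_k = \log(2c) + \frac{\bar\theta}{1+\nu_{k-1}}\log c_{k-1}$ such that $\log g_{k+1} \leq \log c_k + (1+\nu_k)\log g_k$ for all $k \geq 0$, and $\nu_k \geq \nu_\infty - \frac{\bar\theta^k}{(1+\bar\nu)^{2k}}$ where $\nu_\infty$ is the positive root of $\bar\nu + \frac{\bar\theta\nu_\infty}{1+\nu_\infty}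 = \nu_\infty$, and $\log c_k \leq (1 + 1/\bar\nu)\log(2c) + \log c_0$. -/

import Mathlib

noncomputable def seqN (ν b t : ℝ) : ℕ → ℝ
  | 0 => b
  | k + 1 => min ν (b + t * seqN ν b t k / (1 + seqN ν b t k))

noncomputable def seqL (ν b t a l0 : ℝ) : ℕ → ℝ
  | 0 => l0
  | k + 1 => a + t / (1 + seqN ν b t k) * seqL ν b t a l0 k

theorem seqN_bounds (ν b t : ℝ) (hb : 0 < b) (hbν : b ≤ ν) (ht : 0 ≤ t) (k : ℕ) :
    b ≤ seqN ν b t k ∧ seqN ν b t k ≤ ν := by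
  induction k with
  | zero => exact ⟨le_refl _, hbν⟩
  | succ k ih =>
    have h0 : 0 ≤ seqN ν b t k := hb.le.trans ih.1
    refine ⟨le_min hbν ?_, min_le_left _ _⟩
    have : 0 ≤ t * seqN ν b t k / (1 + seqN ν b t k) := by positivity
    linarith

theorem seqL_nonneg (ν b t a l0 : ℝ) (hb : 0 < b) (hbν : b ≤ ν) (ht : 0 ≤ t) (ha : 0 ≤ a)
    (hl : 0 ≤ l0) (k : ℕ) : 0 ≤ seqL ν b t a l0 k := by
  induction k with
  | zero => exact hl
  | succ k ih =>
    have h0 : 0 ≤ seqN ν b t k := hb.le.trans (seqN_bounds ν b t hb hbν ht k).1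
    simp only [seqL]
    positivity

theorem seqL_le (ν b t a l0 : ℝ) (hb : 0 < b) (hbν : b ≤ ν) (ht : 0 ≤ t) (ht1 : t ≤ 1)
    (ha : 0 ≤ a) (hl : 0 ≤ l0) (k : ℕ) : seqL ν b t a l0 k ≤ (1 + 1 / b) * a + l0 := by
  induction k with
  | zero =>
    have : 0 ≤ (1 + 1 / b) * a := by positivity
    simp only [seqL]; linarith
  | succ k ih =>
    have h0 := (seqN_bounds ν b t hb hbν ht k).1
    have hr : t / (1 + seqN ν b t k) ≤ 1 / (1 + b) := by gcongr
    have hL := seqL_nonneg ν b t a l0 hb hbν ht ha hl k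
    simp only [seqL]
    have h1 : t / (1 + seqN ν b t k) * seqL ν b t a l0 k
        ≤ 1 / (1 + b) * ((1 + 1 / b) * a + l0) := by
      apply mul_le_mul hr ih hL; positivity
    have h2 : 1 / (1 + b) * ((1 + 1 / b) * a + l0) = a / b + l0 / (1 + b) := by
      field_simp; ring
    have h3 : l0 / (1 + b) ≤ l0 := div_le_self hl (by linarith)
    have h4 : (1 + 1 / b) * a = a + a / b := by ring
    linarith

theorem seqN_lower (ν b t x : ℝ) (hb : 0 < b) (hbν : b ≤ ν) (hν1 : ν ≤ 1) (ht : 0 ≤ t)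
    (hx : b ≤ x) (hxν : x ≤ ν) (hfix : b + t * x / (1 + x) = x) (k : ℕ) :
    x - t ^ k / (1 + b) ^ (2 * k) ≤ seqN ν b t k := by
  induction k with
  | zero => simp [seqN]; linarith
  | succ k ih =>
    have h0 := (seqN_bounds ν b t hb hbν ht k).1
    set n := seqN ν b t k with hn
    have hpos : 0 ≤ t ^ (k+1) / (1 + b) ^ (2 * (k+1)) := by positivity
    have hdef : seqN ν b t (k+1) = min ν (b + t * n / (1 + n)) := rfl
    rw [hdef]
    apply le_min (by linarith)
    have hd : x - (b + t * n / (1 + n)) = t * (x - n) / ((1 + x) * (1 + n)) := by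
      have h1 : 1 + x ≠ 0 := by linarith
      have h2 : 1 + n ≠ 0 := by linarith
      nth_rewrite 1 [← hfix]
      field_simp; ring
    have hA : 0 ≤ t ^ k / (1 + b) ^ (2 * k) := by positivity
    have hstep : t * (x - n) / ((1 + x) * (1 + n)) ≤
        t * (t ^ k / (1 + b) ^ (2 * k)) / ((1 + b) * (1 + b)) := by
      have h1 : t * (x - n) ≤ t * (t ^ k / (1 + b) ^ (2 * k)) :=
        mul_le_mul_of_nonneg_left (by linarith) ht
      apply div_le_div₀ (by positivity) h1 (by positivity)
      apply mul_le_mul <;> linarith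
    have he : t * (t ^ k / (1 + b) ^ (2 * k)) / ((1 + b) * (1 + b))
        = t ^ (k+1) / (1 + b) ^ (2 * (k+1)) := by
      rw [show 2 * (k+1) = 2 * k + 1 + 1 by ring, pow_succ, pow_succ, pow_succ]
      field_simp
    linarith

theorem log_small (b m x : ℝ) (hb : 0 < b) (hm : 1 ≤ m) (hx : 0 < x)
    (h : x ≤ m ^ (-(1 / b))) : Real.log m + b * Real.log x ≤ 0 := by
  have h1 := Real.log_le_log hx h
  rw [Real.log_rpow (by linarith)] at h1
  have h2 := mul_le_mul_of_nonneg_left h1 hb.le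
  have h3 : b * (-(1 / b) * Real.log m) = - Real.log m := by field_simp
  linarith

theorem pow_as_exp (x y : ℝ) (hx : 0 < x) : x ^ y = Real.exp (y * Real.log x) := by
  rw [Real.rpow_def_of_pos hx, mul_comm]

theorem stmt8 (g : ℕ → ℝ) (c₀ c ν θ : ℝ)
    (hg : ∀ k, 0 < g k) (hc0 : 1 ≤ c₀) (hc : 1 ≤ c)
    (hν0 : 0 < ν) (hν1 : ν ≤ 1) (hθ : 0 ≤ θ) :
    let νb := ν / (1 + ν)
    let θb := min θ ν
    let νinf := -(1 / 2) * (1 - νb - θb) +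
      1 / 2 * Real.sqrt ((1 - νb - θb) ^ 2 + 4 * νb)
    Real.log (g 1) ≤ Real.log c₀ + (1 + νb) * Real.log (g 0) →
    (∀ k, 1 ≤ k →
      g (k + 1) ≤ c * g k ^ (1 + ν) + c * g k ^ (1 + νb) * (g k / g (k - 1)) ^ θ) →
    g 0 ≤ min 1 (min ((2 * c) ^ (-(1 / νb))) (c₀ ^ (-(1 / νb)))) →
    ∃ C N : ℕ → ℝ, C 0 = c₀ ∧ N 0 = νb ∧
      (∀ k, 1 ≤ k → N k = min ν (νb + θb * N (k - 1) / (1 + N (k - 1)))) ∧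
      (∀ k, 1 ≤ k →
        Real.log (C k) = Real.log (2 * c) + θb / (1 + N (k - 1)) * Real.log (C (k - 1))) ∧
      (∀ k, 1 ≤ C k) ∧
      (∀ k, g (k + 1) ≤ g k) ∧
      (∀ k, Real.log (g (k + 1)) ≤ Real.log (C k) + (1 + N k) * Real.log (g k)) ∧
      (∀ k, νinf - θb ^ k / (1 + νb) ^ (2 * k) ≤ N k) ∧
      (∀ k, Real.log (C k) ≤ (1 + 1 / νb) * Real.log (2 * c) + Real.log c₀) := by
  intro νb θb νinf h1 hrec hg0
  have hb : 0 < νb := by positivity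
  have hbν : νb ≤ ν := div_le_self hν0.le (by linarith)
  have ht : 0 ≤ θb := le_min hθ hν0.le
  have htν : θb ≤ ν := min_le_right _ _
  have htθ : θb ≤ θ := min_le_left _ _
  have hνb : νb * (1 + ν) = ν := by
    show ν / (1 + ν) * (1 + ν) = ν
    field_simp
  have hl0 : 0 ≤ Real.log c₀ := Real.log_nonneg hc0
  have ha : 0 ≤ Real.log (2 * c) := Real.log_nonneg (by linarith)
  have hs0 : 0 ≤ (1 - νb - θb) ^ 2 + 4 * νb := by positivity
  have hsq := Real.sq_sqrt hs0
  have hsn := Real.sqrt_nonneg ((1 - νb - θb) ^ 2 + 4 * νb)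
  have hinf : νinf = -(1 / 2) * (1 - νb - θb) +
      1 / 2 * Real.sqrt ((1 - νb - θb) ^ 2 + 4 * νb) := rfl
  clear_value νb θb νinf
  have hsv : Real.sqrt ((1 - νb - θb) ^ 2 + 4 * νb) = 2 * νinf + (1 - νb - θb) := by
    rw [hinf]; ring
  rw [hsv] at hsq hsn
  have hquad : νinf ^ 2 + (1 - νb - θb) * νinf - νb = 0 := by nlinarith
  have hxb : νb ≤ νinf := by
    have hle : |1 - νb - θb + 2 * νb| ≤ 2 * νinf + (1 - νb - θb) := by
      refine abs_le_of_sq_le_sq ?_ hsn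
      rw [hsq]; nlinarith [mul_nonneg hb.le ht]
    have := le_of_abs_le hle
    linarith
  have hxν : νinf ≤ ν := by
    by_contra hcon
    push Not at hcon
    nlinarith [mul_nonneg hν0.le (sub_nonneg.2 htν), mul_pos (sub_pos.2 hcon) hb,
      mul_pos (sub_pos.2 hcon) hν0, mul_pos (sub_pos.2 hcon) (hb.trans_le hxb)]
  have hfix : νb + θb * νinf / (1 + νinf) = νinf := by
    have : 1 + νinf ≠ 0 := by linarith
    field_simp
    linarith
  have hL := seqL_nonneg ν νb θb (Real.log (2 * c)) (Real.log c₀) hb hbν ht ha hl0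
  have hN := seqN_bounds ν νb θb hb hbν ht
  have hg01 : g 0 ≤ 1 := hg0.trans (min_le_left _ _)
  have hsm1 : Real.log (2 * c) + νb * Real.log (g 0) ≤ 0 :=
    log_small _ _ _ hb (by linarith) (hg 0)
      (hg0.trans ((min_le_right _ _).trans (min_le_left _ _)))
  have hsm2 : Real.log c₀ + νb * Real.log (g 0) ≤ 0 :=
    log_small _ _ _ hb (by linarith) (hg 0)
      (hg0.trans ((min_le_right _ _).trans (min_le_right _ _)))
  have h2c : Real.exp (Real.log (2 * c)) = 2 * c := Real.exp_log (by linarith)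
  have hmono : ∀ k, g (k + 1) ≤ g k ∧ g k ≤ g 0 := by
    intro k
    induction k with
    | zero =>
      refine ⟨?_, le_refl _⟩
      apply (Real.log_le_log_iff (hg _) (hg _)).1
      linarith
    | succ k ih =>
      have hk0 : g (k + 1) ≤ g 0 := ih.1.trans ih.2
      refine ⟨?_, hk0⟩
      have hlk : Real.log (g (k+1)) ≤ 0 := Real.log_nonpos (hg _).le (hk0.trans hg01)
      have hr := hrec (k + 1) (by omega)
      rw [Nat.add_sub_cancel] at hr
      have hq : (g (k+1) / g k) ^ θ ≤ 1 :=
        Real.rpow_le_one (div_nonneg (hg _).le (hg _).le) ((div_le_one (hg _)).2 ih.1) hθ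
      have hp : g (k+1) ^ (1 + ν) ≤ g (k+1) ^ (1 + νb) :=
        Real.rpow_le_rpow_of_exponent_ge (hg _) (hk0.trans hg01) (by linarith)
      have hp0 : 0 ≤ c * g (k+1) ^ (1 + νb) :=
        mul_nonneg (by linarith) (Real.rpow_nonneg (hg _).le _)
      have hfin : 2 * c * g (k+1) ^ (1 + νb) ≤ g (k+1) := by
        rw [pow_as_exp _ _ (hg _), ← h2c, ← Real.exp_add]
        nth_rewrite 2 [← Real.exp_log (hg (k+1))]
        apply Real.exp_le_exp.2
        have := mul_le_mul_of_nonneg_left (Real.log_le_log (hg _) hk0) hb.le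
        linarith
      have e1 := mul_le_mul_of_nonneg_left hp (by linarith : 0 ≤ c)
      have e2 := mul_le_mul_of_nonneg_left hq hp0
      linarith
  refine ⟨fun k => Real.exp (seqL ν νb θb (Real.log (2 * c)) (Real.log c₀) k), seqN ν νb θb,
    ?_, rfl, ?_, ?_, ?_, fun k => (hmono k).1, ?_, ?_, ?_⟩
  · exact Real.exp_log (by linarith)
  · intro k hk
    obtain ⟨k, rfl⟩ := Nat.exists_eq_add_of_le' hk
    rfl
  · intro k hk
    obtain ⟨k, rfl⟩ := Nat.exists_eq_add_of_le' hk
    simp only [Real.log_exp]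
    rfl
  · intro k
    exact Real.one_le_exp (hL k)
  · intro k
    simp only [Real.log_exp]
    induction k with
    | zero => exact h1
    | succ k ih =>
      have hk1 := (hmono (k+1)).2.trans hg01
      have hlk : Real.log (g (k+1)) ≤ 0 := Real.log_nonpos (hg _).le hk1
      have hr := hrec (k + 1) (by omega)
      rw [Nat.add_sub_cancel] at hr
      have hLd : seqL ν νb θb (Real.log (2 * c)) (Real.log c₀) (k+1) = Real.log (2 * c) +
        θb / (1 + seqN ν νb θb k) * seqL ν νb θb (Real.log (2 * c)) (Real.log c₀) k := rfl
      have hNd : seqN ν νb θb (k+1) =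
        min ν (νb + θb * seqN ν νb θb k / (1 + seqN ν νb θb k)) := rfl
      rw [hLd]
      have hNl1 : seqN ν νb θb (k+1) ≤ ν := (hN _).2
      have hNl2 : seqN ν νb θb (k+1) ≤ νb + θb * seqN ν νb θb k / (1 + seqN ν νb θb k) := by
        rw [hNd]; exact min_le_right _ _
      have hLk := hL k
      have hnb := (hN k).1
      generalize seqN ν νb θb (k+1) = m at *
      generalize seqN ν νb θb k = n at *
      generalize seqL ν νb θb (Real.log (2 * c)) (Real.log c₀) k = l at *
      have hn : 0 < 1 + n := by linarith
      have hq : (g (k+1) / g k) ^ θ ≤ (g (k+1) / g k) ^ θb :=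
        Real.rpow_le_rpow_of_exponent_ge (div_pos (hg _) (hg _))
          ((div_le_one (hg _)).2 (hmono k).1) htθ
      rw [pow_as_exp _ θb (div_pos (hg _) (hg _)),
        Real.log_div (hg _).ne' (hg _).ne'] at hq
      have hdiff : Real.log (g (k+1)) - Real.log (g k) ≤
          (n * Real.log (g (k+1)) + l) / (1 + n) := by
        rw [le_div_iff₀ hn]; linarith
      have hdt := mul_le_mul_of_nonneg_left hdiff ht
      have hdt' : θb * ((n * Real.log (g (k+1)) + l) / (1 + n)) =
        θb * n / (1 + n) * Real.log (g (k+1)) + θb / (1 + n) * l := by ring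
      have hs : 0 ≤ θb / (1 + n) * l := by positivity
      have m1 := mul_le_mul_of_nonpos_right hNl1 hlk
      have m2 := mul_le_mul_of_nonpos_right hNl2 hlk
      have t1 : g (k+1) ^ (1 + ν) ≤
          Real.exp (θb / (1 + n) * l + (1 + m) * Real.log (g (k+1))) := by
        rw [pow_as_exp _ _ (hg _)]
        apply Real.exp_le_exp.2
        linarith
      have t2 : g (k+1) ^ (1 + νb) * (g (k+1) / g k) ^ θ ≤
          Real.exp (θb / (1 + n) * l + (1 + m) * Real.log (g (k+1))) := by
        refine (mul_le_mul_of_nonneg_left hq (Real.rpow_nonneg (hg _).le _)).trans ?_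
        rw [pow_as_exp _ _ (hg _), ← Real.exp_add]
        apply Real.exp_le_exp.2
        linarith
      have e1 := mul_le_mul_of_nonneg_left t1 (by linarith : 0 ≤ c)
      have e2 := mul_le_mul_of_nonneg_left t2 (by linarith : 0 ≤ c)
      apply (Real.log_le_iff_le_exp (hg _)).2
      rw [add_assoc (Real.log (2 * c)), Real.exp_add, h2c]
      linarith
  · exact seqN_lower ν νb θb νinf hb hbν hν1 ht hxb hxν hfix
  · intro k
    simp only [Real.log_exp]
    exact seqL_le ν νb θb _ _ hb hbν ht (htν.trans hν1) ha hl0 k
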